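/- arXiv:2009.02921 — 2 statements merged into one kernel-verified Lean document; each statement's English description precedes it below -/
import Mathlib

section
/- The function κ ↦ I_{d/2}(κ)/I_{d/2−1}(κ) is strictly increasing on [0, ∞), maps [0, ∞) into [0, 1), and equals 0 only at κ = 0. -/
open scoped RealInnerProductSpace BigOperators ENNReal NNReal Classical
open MeasureTheory Filter Real ProbabilityTheory Asymptotics

/-- Modified Bessel function of the first kind of order `r`. -/
noncomputable def besselI (r z : ℝ) : ℝ :=
  ∑' m : ℕ, (z / 2) ^ (2 * (m : ℝ) + r) / ((Nat.factorial m) * Real.Gamma ((m : ℝ) + r + 1))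

/-- Normalizing constant of the `d`-dimensional von Mises-Fisher density. -/
noncomputable def vmfConst (d : ℕ) (κ : ℝ) : ℝ :=
  κ ^ ((d : ℝ) / 2 - 1) / ((2 * Real.pi) ^ ((d : ℝ) / 2) * besselI ((d : ℝ) / 2 - 1) κ)

/-- von Mises-Fisher density with mean direction `μ` and concentration `κ`. -/
noncomputable def vmfDensity (d : ℕ) (μ x : EuclideanSpace ℝ (Fin d)) (κ : ℝ) : ℝ :=
  vmfConst d κ * Real.exp (κ * ⟪μ, x⟫)

/-- The unit sphere `S^{d-1}` in `ℝ^d`. -/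
abbrev Sph (d : ℕ) := Metric.sphere (0 : EuclideanSpace ℝ (Fin d)) 1

/-- Open geodesic ball of radius `r` centered at `μ` on the unit sphere. -/
noncomputable def gBall {d : ℕ} (μ : Sph d) (r : ℝ) : Set (Sph d) :=
  {y | Real.arccos ⟪(μ : EuclideanSpace ℝ (Fin d)), (y : EuclideanSpace ℝ (Fin d))⟫ < r}

/-- Surface measure on the unit sphere, realized as `(d-1)`-dimensional Hausdorff measure. -/
noncomputable def sphMeasure (d : ℕ) : Measure (Sph d) := μH[(d : ℝ) - 1]

/-- The constant `A₂ = 2^{d-1} · 2π^{(d-1)/2} / Γ((d-1)/2)`. -/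
noncomputable def A2val (d : ℕ) : ℝ :=
  2 ^ (d - 1) * (2 * Real.pi ^ (((d : ℝ) - 1) / 2) / Real.Gamma (((d : ℝ) - 1) / 2))

/-! Write `I_ν(z) = (z/2)^ν Φ_ν((z/2)²)`. The power series `Φ_ν` has positive coefficients and
satisfies `Φ_ν' = Φ_{ν+1}` and `Φ_ν = X Φ_{ν+1}' + (ν + 1) Φ_{ν+1}`, so
`(Φ_ν²)' = 2 Φ_{ν+1} Φ_ν = X (Φ_{ν+1}²)' + (2ν + 2) Φ_{ν+1}²`. Comparing coefficients, the squared
ratio `(I_{ν+1} / I_ν)²`, as a quotient of power series in `(z/2)²`, has a numerator whose `n`-th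
coefficient is `n / (n + 2ν + 1)` times that of the denominator. For `ν ≥ -1/2` these weights lie in
`[0, 1]` and increase with `n`, so the quotient is less than `1` and, by Chebyshev's sum inequality,
increasing. The unsquared ratio would not do: there the factor `z` increases, but the coefficient
ratios `1 / (n + ν + 1)` decrease. -/

open PowerSeries

lemma hasSum_mul_lt_mul_of_monovary {ι : Type*} {w f g : ι → ℝ} {W F G FG : ℝ}
    (hw : ∀ i, 0 < w i) (hfg : Monovary f g) {i j : ι} (hf : f i < f j) (hg : g i < g j)
    (hW : HasSum w W) (hF : HasSum (fun k => w k * f k) F) (hG : HasSum (fun k => w k * g k) G)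
    (hFG : HasSum (fun k => w k * (f k * g k)) FG) :
    F * G < W * FG := by
  have hprod {a b : ι → ℝ} {A B : ℝ} (ha : HasSum a A) (hb : HasSum b B) :
      HasSum (fun k : ι × ι => a k.1 * b k.2) (A * B) :=
    ha.mul hb (summable_mul_of_summable_norm ha.summable.norm hb.summable.norm)
  have hsum : HasSum (fun k : ι × ι => w k.1 * w k.2 * ((f k.2 - f k.1) * (g k.2 - g k.1)))
      (2 * (W * FG - F * G)) := by
    rw [show 2 * (W * FG - F * G) = W * FG + FG * W - (F * G + G * F) by ring]
    exact (((hprod hW hFG).add (hprod hFG hW)).sub ((hprod hF hG).add (hprod hG hF))).congr_fun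
      fun k => by ring
  have hpos : 0 < 2 * (W * FG - F * G) := by
    refine hasSum_lt (i := (i, j)) (fun k => ?_) ?_ hasSum_zero hsum
    · exact mul_nonneg (mul_pos (hw _) (hw _)).le (hfg.sub_mul_sub_nonneg _ _)
    · exact mul_pos (mul_pos (hw _) (hw _)) (mul_pos (sub_pos.2 hf) (sub_pos.2 hg))
  linarith

lemma hasSum_mul_pow_pos {p : ℕ → ℝ} (hp : ∀ n, 0 < p n) {t P : ℝ} (ht : 0 < t)
    (hP : HasSum (fun n => p n * t ^ n) P) : 0 < P :=
  have hterm (n : ℕ) : 0 < p n * t ^ n := mul_pos (hp n) (pow_pos ht n)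
  hasSum_lt (fun n => (hterm n).le) (hterm 0) hasSum_zero hP

lemma hasSum_mul_pow_div_lt_div {p r : ℕ → ℝ} (hp : ∀ n, 0 < p n) (hr : Monotone r) {i j : ℕ}
    (hij : r i < r j) {s t P Q P' Q' : ℝ} (hs : 0 < s) (hst : s < t)
    (hP : HasSum (fun n => p n * s ^ n) P) (hQ : HasSum (fun n => r n * p n * s ^ n) Q)
    (hP' : HasSum (fun n => p n * t ^ n) P') (hQ' : HasSum (fun n => r n * p n * t ^ n) Q') :
    Q / P < Q' / P' := by
  have hpow (n : ℕ) : s ^ n * (t / s) ^ n = t ^ n := by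
    rw [← mul_pow, mul_div_cancel₀ t hs.ne']
  have hq : StrictMono fun n : ℕ => (t / s) ^ n := pow_right_strictMono₀ ((one_lt_div hs).2 hst)
  rw [div_lt_div_iff₀ (hasSum_mul_pow_pos hp hs hP) (hasSum_mul_pow_pos hp (hs.trans hst) hP'),
    mul_comm Q' P]
  refine hasSum_mul_lt_mul_of_monovary (w := fun n => p n * s ^ n)
    (fun n => mul_pos (hp n) (pow_pos hs n)) (hr.monovary hq.monotone) hij
    (hq (hr.reflect_lt hij)) hP ?_ ?_ ?_
  · exact hQ.congr_fun fun n => by ring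
  · simpa only [mul_assoc, hpow] using hP'
  · simpa only [mul_assoc, mul_left_comm, hpow] using hQ'

lemma coeff_X_mul_derivative {R : Type*} [CommSemiring R] (φ : R⟦X⟧) (n : ℕ) :
    coeff n (X * d⁄dX R φ) = n * coeff n φ := by
  cases n with
  | zero => simp
  | succ n => rw [coeff_succ_X_mul, coeff_derivative, mul_comm, Nat.cast_succ]

lemma coeff_mul_pos {R : Type*} [CommSemiring R] [PartialOrder R] [IsStrictOrderedRing R]
    {φ ψ : R⟦X⟧} (hφ : ∀ n, 0 < coeff n φ) (hψ : ∀ n, 0 < coeff n ψ) (n : ℕ) :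
    0 < coeff n (φ * ψ) := by
  rw [coeff_mul]
  exact Finset.sum_pos (fun _ _ => mul_pos (hφ _) (hψ _)) ⟨(0, n), by simp⟩

lemma hasSum_coeff_mul {R : Type*} [NormedCommRing R] [CompleteSpace R] {φ ψ : R⟦X⟧} {t a b : R}
    (hφ : Summable fun n => ‖coeff n φ * t ^ n‖) (hψ : Summable fun n => ‖coeff n ψ * t ^ n‖)
    (ha : HasSum (fun n => coeff n φ * t ^ n) a) (hb : HasSum (fun n => coeff n ψ * t ^ n) b) :
    HasSum (fun n => coeff n (φ * ψ) * t ^ n) (a * b) := by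
  have hcoeff (n : ℕ) : coeff n (φ * ψ) * t ^ n = ∑ k ∈ Finset.HasAntidiagonal.antidiagonal n,
      coeff k.1 φ * t ^ k.1 * (coeff k.2 ψ * t ^ k.2) := by
    rw [coeff_mul, Finset.sum_mul]
    refine Finset.sum_congr rfl fun k hk => ?_
    rw [← Finset.HasAntidiagonal.mem_antidiagonal.1 hk, pow_add, mul_mul_mul_comm]
  simp only [hcoeff]
  rw [← ha.tsum_eq, ← hb.tsum_eq,
    tsum_mul_tsum_eq_tsum_sum_antidiagonal_of_summable_norm hφ hψ]
  exact (summable_norm_sum_mul_antidiagonal_of_summable_norm hφ hψ).of_norm.hasSum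

/-- The power series `Φ_ν = ∑ Xᵐ / (m! Γ(m + ν + 1))`, for which `I_ν(z) = (z/2)^ν Φ_ν((z/2)²)`.
Since `Real.Gamma` is `0` at the poles of `Γ`, its inverse there is the value `0` of the entire
function `1 / Γ`. -/
noncomputable def besselSeries (ν : ℝ) : ℝ⟦X⟧ :=
  .mk fun m => (m.factorial * Real.Gamma (m + ν + 1))⁻¹

lemma coeff_besselSeries (ν : ℝ) (m : ℕ) :
    coeff m (besselSeries ν) = (m.factorial * Real.Gamma (m + ν + 1))⁻¹ :=
  coeff_mk _ _

lemma coeff_besselSeries_pos {ν : ℝ} (hν : -1 < ν) (m : ℕ) : 0 < coeff m (besselSeries ν) := by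
  have hΓ : 0 < Real.Gamma (m + ν + 1) :=
    Real.Gamma_pos_of_pos (by linarith [m.cast_nonneg (α := ℝ)])
  rw [coeff_besselSeries]
  positivity

lemma inv_Gamma_eq_mul_inv_Gamma_add_one (s : ℝ) :
    (Real.Gamma s)⁻¹ = s * (Real.Gamma (s + 1))⁻¹ := by
  rcases eq_or_ne s 0 with rfl | hs
  · rw [Real.Gamma_zero, inv_zero, zero_mul]
  · rw [Real.Gamma_add_one hs, mul_inv, mul_inv_cancel_left₀ hs]

lemma derivative_besselSeries (ν : ℝ) : d⁄dX ℝ (besselSeries ν) = besselSeries (ν + 1) := by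
  ext m
  have hm : (m : ℝ) + 1 ≠ 0 := m.cast_add_one_ne_zero
  rw [coeff_derivative, coeff_besselSeries, coeff_besselSeries, Nat.factorial_succ]
  push_cast
  rw [show (m : ℝ) + 1 + ν + 1 = m + (ν + 1) + 1 by ring]
  field_simp

lemma besselSeries_eq_X_mul_derivative_add (ν : ℝ) :
    besselSeries ν
      = X * d⁄dX ℝ (besselSeries (ν + 1)) + C (ν + 1) * besselSeries (ν + 1) := by
  ext m
  rw [map_add, coeff_X_mul_derivative, coeff_C_mul, coeff_besselSeries, coeff_besselSeries,
    mul_inv, inv_Gamma_eq_mul_inv_Gamma_add_one]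
  ring_nf

lemma derivative_besselSeries_sq (ν : ℝ) :
    d⁄dX ℝ (besselSeries ν ^ 2)
      = X * d⁄dX ℝ (besselSeries (ν + 1) ^ 2) + C (2 * ν + 2) * besselSeries (ν + 1) ^ 2 := by
  have hC : (C (2 * ν + 2) : ℝ⟦X⟧) = 2 * C (ν + 1) := by
    rw [show 2 * ν + 2 = 2 * (ν + 1) by ring, map_mul, map_ofNat]
  rw [derivative_pow, derivative_pow, derivative_besselSeries, hC]
  linear_combination 2 * besselSeries (ν + 1) * besselSeries_eq_X_mul_derivative_add ν

lemma succ_mul_coeff_besselSeries_sq (ν : ℝ) (n : ℕ) :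
    (n + 1) * coeff (n + 1) (besselSeries ν ^ 2)
      = (n + 2 * ν + 2) * coeff n (besselSeries (ν + 1) ^ 2) := by
  have h := congrArg (coeff n) (derivative_besselSeries_sq ν)
  rw [coeff_derivative, map_add, coeff_X_mul_derivative, coeff_C_mul] at h
  linear_combination h

lemma summable_coeff_besselSeries (ν t : ℝ) :
    Summable fun m => coeff m (besselSeries ν) * t ^ m := by
  refine (Real.summable_pow_div_factorial |t|).of_norm_bounded_eventually_nat ?_
  filter_upwards [eventually_ge_atTop ⌈1 - ν⌉₊] with m hm
  have hΓ : 1 ≤ Real.Gamma (m + ν + 1) := by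
    have h2 : 2 ≤ m + ν + 1 := by linarith [Nat.ceil_le.1 hm]
    simpa only [Real.Gamma_two] using
      Real.Gamma_strictMonoOn_Ici.monotoneOn (Set.mem_Ici.2 le_rfl) h2 h2
  rw [coeff_besselSeries, norm_mul, norm_pow, Real.norm_eq_abs, Real.norm_eq_abs,
    abs_of_nonneg (by positivity), div_eq_inv_mul]
  gcongr
  exact le_mul_of_one_le_right (by positivity) hΓ

lemma hasSum_coeff_besselSeries (ν : ℝ) {z : ℝ} (hz : 0 < z) :
    HasSum (fun m => coeff m (besselSeries ν) * ((z / 2) ^ 2) ^ m) (besselI ν z / (z / 2) ^ ν) := by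
  have hz2 : 0 < z / 2 := half_pos hz
  have hterm (m : ℕ) : (z / 2) ^ (2 * (m : ℝ) + ν) / (m.factorial * Real.Gamma (m + ν + 1))
      = coeff m (besselSeries ν) * ((z / 2) ^ 2) ^ m * (z / 2) ^ ν := by
    rw [coeff_besselSeries, Real.rpow_add hz2, ← Nat.cast_ofNat, ← Nat.cast_mul,
      Real.rpow_natCast, pow_mul]
    ring
  have hI : besselI ν z = (∑' m, coeff m (besselSeries ν) * ((z / 2) ^ 2) ^ m) * (z / 2) ^ ν := by
    rw [besselI, tsum_congr hterm, tsum_mul_right]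
  rw [hI, mul_div_cancel_right₀ _ (Real.rpow_pos_of_pos hz2 ν).ne']
  exact (summable_coeff_besselSeries ν _).hasSum

lemma hasSum_coeff_besselSeries_sq (ν : ℝ) {z : ℝ} (hz : 0 < z) :
    HasSum (fun n => coeff n (besselSeries ν ^ 2) * ((z / 2) ^ 2) ^ n)
      ((besselI ν z / (z / 2) ^ ν) ^ 2) := by
  have h := hasSum_coeff_besselSeries ν hz
  simpa only [sq] using hasSum_coeff_mul h.summable.norm h.summable.norm h h

lemma hasSum_weighted_coeff_besselSeries_sq {ν : ℝ} (hν : -1 < ν) {z : ℝ} (hz : 0 < z) :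
    HasSum (fun n : ℕ => n / (n + (2 * ν + 1)) * coeff n (besselSeries ν ^ 2) * ((z / 2) ^ 2) ^ n)
      ((besselI (ν + 1) z / (z / 2) ^ ν) ^ 2) := by
  have hz2 : 0 < z / 2 := half_pos hz
  have hshift (n : ℕ) : ((n + 1 : ℕ) : ℝ) / ((n + 1 : ℕ) + (2 * ν + 1))
      * coeff (n + 1) (besselSeries ν ^ 2) * ((z / 2) ^ 2) ^ (n + 1)
      = (z / 2) ^ 2 * (coeff n (besselSeries (ν + 1) ^ 2) * ((z / 2) ^ 2) ^ n) := by
    have h0 : (n : ℝ) + 2 * ν + 2 ≠ 0 := by linarith [n.cast_nonneg (α := ℝ)]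
    push_cast
    rw [div_mul_eq_mul_div, succ_mul_coeff_besselSeries_sq,
      show (n : ℝ) + 1 + (2 * ν + 1) = n + 2 * ν + 2 by ring, mul_div_cancel_left₀ _ h0]
    ring
  have hsq : (besselI (ν + 1) z / (z / 2) ^ ν) ^ 2
      = (z / 2) ^ 2 * (besselI (ν + 1) z / (z / 2) ^ (ν + 1)) ^ 2 := by
    rw [Real.rpow_add_one hz2.ne']
    field_simp
  rw [← hasSum_nat_add_iff' 1, Finset.sum_range_one, Nat.cast_zero, zero_div, zero_mul, zero_mul,
    sub_zero, hsq]
  simpa only [hshift] using (hasSum_coeff_besselSeries_sq (ν + 1) hz).mul_left ((z / 2) ^ 2)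

lemma besselI_pos {ν : ℝ} (hν : -1 < ν) {z : ℝ} (hz : 0 < z) : 0 < besselI ν z := by
  have h : 0 < besselI ν z / (z / 2) ^ ν :=
    hasSum_mul_pow_pos (coeff_besselSeries_pos hν) (by positivity) (hasSum_coeff_besselSeries ν hz)
  exact (div_pos_iff_of_pos_right (by positivity)).1 h

lemma besselI_zero_right {ν : ℝ} (hν : 0 < ν) : besselI ν 0 = 0 := by
  have hterm (m : ℕ) : (0 : ℝ) ^ (2 * (m : ℝ) + ν) = 0 := Real.zero_rpow (by positivity)
  simp only [besselI, zero_div, hterm, tsum_zero]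

lemma coeff_besselSeries_sq_pos {ν : ℝ} (hν : -1 < ν) (n : ℕ) :
    0 < coeff n (besselSeries ν ^ 2) :=
  sq (besselSeries ν) ▸ coeff_mul_pos (coeff_besselSeries_pos hν) (coeff_besselSeries_pos hν) n

-- For `c = 0` the value at `n = 0` is `0 / 0 = 0`, below all the others, which are `1`.
lemma monotone_natCast_div_add {c : ℝ} (hc : 0 ≤ c) : Monotone fun n : ℕ => (n / (n + c) : ℝ) := by
  refine monotone_nat_of_le_succ fun n => ?_
  rcases n.eq_zero_or_pos with rfl | hn
  · rw [Nat.cast_zero, zero_div]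
    positivity
  · rw [div_le_div_iff₀ (by positivity) (by positivity)]
    push_cast
    linarith

lemma besselI_add_one_lt_besselI {ν : ℝ} (hν : -(1 / 2) ≤ ν) {z : ℝ} (hz : 0 < z) :
    besselI (ν + 1) z < besselI ν z := by
  have hν1 : -1 < ν := by linarith
  have hc : 0 ≤ 2 * ν + 1 := by linarith
  have hterm (n : ℕ) : 0 < coeff n (besselSeries ν ^ 2) * ((z / 2) ^ 2) ^ n :=
    mul_pos (coeff_besselSeries_sq_pos hν1 n) (by positivity)
  have hsq : (besselI (ν + 1) z / (z / 2) ^ ν) ^ 2 < (besselI ν z / (z / 2) ^ ν) ^ 2 := by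
    refine hasSum_lt (i := 0) (fun n => ?_) ?_ (hasSum_weighted_coeff_besselSeries_sq hν1 hz)
      (hasSum_coeff_besselSeries_sq ν hz)
    · rw [mul_assoc]
      exact mul_le_of_le_one_left (hterm n).le
        (div_le_one_of_le₀ (le_add_of_nonneg_right hc) (by positivity))
    · simpa only [Nat.cast_zero, zero_div, zero_mul] using hterm 0
  have hpow : 0 < (z / 2) ^ ν := by positivity
  have hpos := besselI_pos hν1 hz
  exact (div_lt_div_iff_of_pos_right hpow).1 (lt_of_pow_lt_pow_left₀ 2 (by positivity) hsq)

lemma besselI_ratio_pos {ν : ℝ} (hν : -1 < ν) {z : ℝ} (hz : 0 < z) :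
    0 < besselI (ν + 1) z / besselI ν z :=
  div_pos (besselI_pos (by linarith) hz) (besselI_pos hν hz)

lemma strictMonoOn_besselI_ratio {ν : ℝ} (hν : -(1 / 2) ≤ ν) :
    StrictMonoOn (fun z => besselI (ν + 1) z / besselI ν z) (Set.Ioi 0) := by
  intro x (hx : 0 < x) y (hy : 0 < y) hxy
  have hν1 : -1 < ν := by linarith
  have hc : 0 ≤ 2 * ν + 1 := by linarith
  have hratio {z : ℝ} (hz : 0 < z) : (besselI (ν + 1) z / besselI ν z) ^ 2
      = (besselI (ν + 1) z / (z / 2) ^ ν) ^ 2 / (besselI ν z / (z / 2) ^ ν) ^ 2 := by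
    rw [← div_pow, div_div_div_cancel_right₀ (by positivity)]
  have hweight : ((0 : ℕ) / ((0 : ℕ) + (2 * ν + 1)) : ℝ) < (1 : ℕ) / ((1 : ℕ) + (2 * ν + 1)) := by
    rw [Nat.cast_zero, zero_div]
    positivity
  refine lt_of_pow_lt_pow_left₀ 2 (besselI_ratio_pos hν1 hy).le ?_
  rw [hratio hx, hratio hy]
  exact hasSum_mul_pow_div_lt_div (coeff_besselSeries_sq_pos hν1) (monotone_natCast_div_add hc)
    hweight (by positivity) (by gcongr)
    (hasSum_coeff_besselSeries_sq ν hx) (hasSum_weighted_coeff_besselSeries_sq hν1 hx)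
    (hasSum_coeff_besselSeries_sq ν hy) (hasSum_weighted_coeff_besselSeries_sq hν1 hy)

/-- At `κ = 0` the ratio is the junk value `0 / 0 = 0` unless `ν = 0`; it agrees with the limit. -/
theorem besselRatio_props_general {ν : ℝ} (hν : -(1 / 2) ≤ ν) :
    StrictMonoOn (fun κ => besselI (ν + 1) κ / besselI ν κ) (Set.Ici 0) ∧
    (∀ κ : ℝ, 0 ≤ κ → besselI (ν + 1) κ / besselI ν κ ∈ Set.Ico 0 1) ∧
    (∀ κ : ℝ, 0 ≤ κ → (besselI (ν + 1) κ / besselI ν κ = 0 ↔ κ = 0)) := by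
  have hν1 : -1 < ν := by linarith
  have hzero : besselI (ν + 1) 0 / besselI ν 0 = 0 := by
    rw [besselI_zero_right (by linarith), zero_div]
  refine ⟨fun x hx y _ hxy => ?_, fun κ hκ => ?_, fun κ hκ => ?_⟩
  · rcases (Set.mem_Ici.1 hx).eq_or_lt with rfl | hx
    · simpa only [hzero] using besselI_ratio_pos hν1 hxy
    · exact strictMonoOn_besselI_ratio hν hx (hx.trans hxy) hxy
  · rcases hκ.eq_or_lt with rfl | hκ
    · simp [hzero]
    · exact ⟨(besselI_ratio_pos hν1 hκ).le,
        (div_lt_one (besselI_pos hν1 hκ)).2 (besselI_add_one_lt_besselI hν hκ)⟩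
  · rcases hκ.eq_or_lt with rfl | hκ
    · simp [hzero]
    · exact iff_of_false (besselI_ratio_pos hν1 hκ).ne' hκ.ne'

/-- the Bessel ratio `A_d(κ) = I_{d/2}(κ)/I_{d/2-1}(κ)` is strictly increasing
on `[0,∞)`, maps into `[0,1)`, and vanishes only at `κ = 0`. -/
theorem besselRatio_props (d : ℕ) (hd : 2 ≤ d) :
    StrictMonoOn (fun κ => besselI ((d : ℝ) / 2) κ / besselI ((d : ℝ) / 2 - 1) κ)
        (Set.Ici (0 : ℝ)) ∧
    (∀ κ : ℝ, 0 ≤ κ →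
      besselI ((d : ℝ) / 2) κ / besselI ((d : ℝ) / 2 - 1) κ ∈ Set.Ico (0 : ℝ) 1) ∧
    (∀ κ : ℝ, 0 ≤ κ →
      (besselI ((d : ℝ) / 2) κ / besselI ((d : ℝ) / 2 - 1) κ = 0 ↔ κ = 0)) := by
  have hd2 : (2 : ℝ) ≤ d := by exact_mod_cast hd
  simpa only [sub_add_cancel] using
    besselRatio_props_general (ν := (d : ℝ) / 2 - 1) (by linarith)
end

section
/- For x in S^1 (the circle) and large κ, the von Mises density f(x; μ, κ) = e^{κ cos(x−μ)} / (2π I_0(κ)) converges uniformly on compact neighborhoods of μ to the normal density with mean μ and variance 1/κ, i.e., sup_x | f(x;μ,κ) − √(κ/(2π)) e^{−κ(x−μ)²/2} | → 0 as κ → ∞. -/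
open scoped RealInnerProductSpace BigOperators ENNReal NNReal Classical
open MeasureTheory Filter Real ProbabilityTheory Asymptotics

/-!
With `Z κ = ∫ exp (κ (cos x - 1))` over a period, expanding the exponential under the integral gives
`2 π I₀(κ) = e^κ Z κ`, so the von Mises density is `exp (κ (cos u - 1)) / Z κ`, where `u = x - μ`.
As long as `cos u ≤ 1 - c u ^ 2`, the numerator differs from `exp (-κ u ^ 2 / 2)` by `O(1 / κ)` times
a Gaussian of width of order `1 / √κ`. Integrating this gives `Z κ = √(2 π / κ) + O(κ ^ (-3 / 2))`,
hence `(Z κ)⁻¹ - √(κ / (2 π)) = O(κ ^ (-1 / 2))`. The rate is needed, since the peak height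
`√(κ / (2 π))` diverges: `√(κ / (2 π)) * Z κ → 1` alone would not bound the difference of the peaks.
-/

lemma integral_cos_pow_add_two (n : ℕ) :
    ∫ x in (-π)..π, cos x ^ (n + 2) = (n + 1) / (n + 2) * ∫ x in (-π)..π, cos x ^ n := by
  simp [integral_cos_pow]

lemma integral_cos_pow_odd (m : ℕ) : ∫ x in (-π)..π, cos x ^ (2 * m + 1) = 0 := by
  induction m with
  | zero => simp
  | succ m ih =>
    rw [show 2 * (m + 1) + 1 = 2 * m + 1 + 2 by ring, integral_cos_pow_add_two, ih, mul_zero]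

lemma integral_cos_pow_even (m : ℕ) :
    ∫ x in (-π)..π, cos x ^ (2 * m) =
      2 * π * ((2 * m).factorial / (4 ^ m * (m.factorial : ℝ) ^ 2)) := by
  induction m with
  | zero => simp; ring
  | succ m ih =>
    rw [show 2 * (m + 1) = 2 * m + 1 + 1 by ring, integral_cos_pow_add_two, ih,
      Nat.factorial_succ, Nat.factorial_succ, Nat.factorial_succ]
    push_cast
    field_simp
    ring

lemma hasSum_integral_exp_mul_cos (κ : ℝ) :
    HasSum (fun n : ℕ => κ ^ n / n.factorial * ∫ x in (-π)..π, cos x ^ n)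
      (∫ x in (-π)..π, exp (κ * cos x)) := by
  simp only [← intervalIntegral.integral_const_mul]
  refine intervalIntegral.hasSum_integral_of_dominated_convergence
    (fun n _ => |κ| ^ n / n.factorial) (fun n => by fun_prop) (fun n => .of_forall fun x _ => ?_)
    (.of_forall fun _ _ => Real.summable_pow_div_factorial |κ|) intervalIntegrable_const
    (.of_forall fun x _ => ?_)
  · rw [Real.norm_eq_abs, abs_mul, abs_div, abs_pow, abs_pow, Nat.abs_cast]
    exact mul_le_of_le_one_right (by positivity) (pow_le_one₀ (abs_nonneg _) (abs_cos_le_one x))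
  · simpa only [← Real.exp_eq_exp_ℝ, mul_pow, mul_div_right_comm] using
      NormedSpace.expSeries_div_hasSum_exp (κ * cos x)

lemma besselI_zero_left (z : ℝ) :
    besselI 0 z = ∑' m : ℕ, (z / 2) ^ (2 * m) / (m.factorial : ℝ) ^ 2 := by
  refine tsum_congr fun m => ?_
  have h_rpow : (z / 2) ^ (2 * (m : ℝ)) = (z / 2) ^ (2 * m) := by
    exact_mod_cast Real.rpow_natCast (z / 2) (2 * m)
  rw [add_zero, add_zero, Real.Gamma_nat_eq_factorial, h_rpow, ← sq]

lemma two_pi_mul_besselI_zero (κ : ℝ) :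
    2 * π * besselI 0 κ = ∫ x in (-π)..π, exp (κ * cos x) := by
  have h_odd : ∀ n ∉ Set.range (2 * · : ℕ → ℕ),
      κ ^ n / n.factorial * ∫ x in (-π)..π, cos x ^ n = 0 := by
    intro n hn
    obtain ⟨m, rfl | rfl⟩ := n.even_or_odd'
    · exact absurd ⟨m, rfl⟩ hn
    · rw [integral_cos_pow_odd, mul_zero]
  have h_even := ((mul_right_injective₀ (two_ne_zero (α := ℕ))).hasSum_iff h_odd).2
    (hasSum_integral_exp_mul_cos κ)
  rw [← h_even.tsum_eq, besselI_zero_left, ← tsum_mul_left]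
  refine tsum_congr fun m => ?_
  have h_four : (2 : ℝ) ^ (2 * m) = 4 ^ m := by rw [pow_mul]; norm_num
  rw [Function.comp_apply, integral_cos_pow_even, div_pow, h_four]
  field_simp

/-- The integral of the von Mises weight `exp (κ cos x)` over the circle, divided by the peak value
`exp κ` of that weight; in terms of the Bessel function it is `2 π e^{-κ} I₀(κ)`. -/
noncomputable def vonMisesMass (κ : ℝ) : ℝ := ∫ x in (-π)..π, exp (κ * (cos x - 1))

lemma exp_mul_cos_div_besselI (κ u : ℝ) :
    exp (κ * cos u) / (2 * π * besselI 0 κ) = exp (κ * (cos u - 1)) / vonMisesMass κ := by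
  have h_peak (x : ℝ) : exp (κ * cos x) = exp κ * exp (κ * (cos x - 1)) := by
    rw [← exp_add, mul_sub_one, add_sub_cancel]
  simp only [two_pi_mul_besselI_zero, h_peak, intervalIntegral.integral_const_mul]
  exact mul_div_mul_left _ _ (exp_ne_zero κ)

lemma cos_eq_one_sub_two_mul_sin_half_sq (x : ℝ) : cos x = 1 - 2 * sin (x / 2) ^ 2 := by
  rw [← cos_two_mul_eq_one_sub, mul_div_cancel₀ x two_ne_zero]

lemma cos_le_one_sub_sq_div_two_add (x : ℝ) : cos x ≤ 1 - x ^ 2 / 2 + x ^ 4 / 24 := by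
  have h_sin : (x / 2) ^ 2 - sin (x / 2) ^ 2 ≤ (x / 2) ^ 4 / 3 :=
    calc (x / 2) ^ 2 - sin (x / 2) ^ 2
        ≤ |x / 2 - sin (x / 2)| * |x / 2 + sin (x / 2)| := by
          rw [← abs_mul]
          exact (le_abs_self _).trans_eq (by ring_nf)
      _ ≤ |x / 2| ^ 3 / 6 * (2 * |x / 2|) := by
          gcongr
          · exact abs_sub_sin_le _
          · linarith [abs_add_le (x / 2) (sin (x / 2)), abs_sin_le_abs (x := x / 2)]
      _ = |x / 2| ^ 4 / 3 := by ring
      _ = (x / 2) ^ 4 / 3 := by rw [Even.pow_abs (by decide)]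
  rw [cos_eq_one_sub_two_mul_sin_half_sq]
  linarith

lemma exists_cos_le_one_sub_mul_sq {a : ℝ} (ha : a < 2 * π) :
    ∃ c > 0, ∀ x ∈ Set.Icc (-a) a, cos x ≤ 1 - c * x ^ 2 := by
  have h_sinc : ∀ x ∈ Set.Icc (-a) a, 0 < sinc (x / 2) ^ 2 / 2 := by
    intro x hx
    suffices sinc (x / 2) ≠ 0 by positivity
    rcases eq_or_ne (x / 2) 0 with h0 | h0
    · simp [h0]
    · have h_sin : sin (x / 2) ≠ 0 := fun h => h0 <|
        (sin_eq_zero_iff_of_lt_of_lt (by linarith [hx.1]) (by linarith [hx.2])).1 h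
      rw [sinc_of_ne_zero h0]
      exact div_ne_zero h_sin h0
  obtain ⟨c, hc, h_le⟩ := isCompact_Icc.exists_forall_le'
    (by fun_prop : Continuous fun x => sinc (x / 2) ^ 2 / 2).continuousOn h_sinc
  refine ⟨c, hc, fun x hx => ?_⟩
  have h_eq : cos x = 1 - sinc (x / 2) ^ 2 / 2 * x ^ 2 := by
    rw [cos_eq_one_sub_two_mul_sin_half_sq]
    rcases eq_or_ne x 0 with rfl | h0
    · simp
    · rw [sinc_of_ne_zero (div_ne_zero h0 two_ne_zero)]
      field_simp
  rw [h_eq]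
  gcongr
  exact h_le x hx

lemma exp_sub_exp_le (p q : ℝ) : exp p - exp q ≤ exp p * (p - q) :=
  calc exp p - exp q = exp p * (1 - exp (q - p)) := by
        rw [mul_one_sub, ← exp_add, add_sub_cancel]
    _ ≤ exp p * (p - q) :=
        mul_le_mul_of_nonneg_left (by linarith [add_one_le_exp (q - p)]) (exp_pos p).le

lemma sq_div_two_mul_exp_neg_le_one {t : ℝ} (ht : 0 ≤ t) : t ^ 2 / 2 * exp (-t) ≤ 1 := by
  rw [exp_neg, ← div_eq_mul_inv, div_le_one (exp_pos t)]
  exact pow_div_factorial_le_exp t ht 2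

lemma abs_exp_cos_sub_gaussian_le {c κ x : ℝ} (hc : 0 < c) (hκ : 0 < κ)
    (hx : cos x ≤ 1 - c * x ^ 2) :
    |exp (κ * (cos x - 1)) - exp (-(κ * x ^ 2) / 2)| ≤
      1 / (3 * c ^ 2 * κ) * exp (-(c * κ / 2) * x ^ 2) := by
  set t := c * κ / 2 * x ^ 2 with ht
  have h_lower : -(κ * x ^ 2) / 2 ≤ κ * (cos x - 1) := by
    linarith [mul_le_mul_of_nonneg_left (one_sub_sq_div_two_le_cos (x := x)) hκ.le]
  have h_upper : κ * (cos x - 1) ≤ -t + -t := by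
    linarith [mul_le_mul_of_nonneg_left hx hκ.le]
  have h_gap : κ * (cos x - 1) - -(κ * x ^ 2) / 2 ≤ κ * x ^ 4 / 24 := by
    linarith [mul_le_mul_of_nonneg_left (cos_le_one_sub_sq_div_two_add x) hκ.le]
  rw [abs_of_nonneg (sub_nonneg.2 (exp_le_exp.2 h_lower)), neg_mul, ← ht]
  calc exp (κ * (cos x - 1)) - exp (-(κ * x ^ 2) / 2)
      ≤ exp (κ * (cos x - 1)) * (κ * (cos x - 1) - -(κ * x ^ 2) / 2) := exp_sub_exp_le _ _
    _ ≤ exp (-t + -t) * (κ * x ^ 4 / 24) := by gcongr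
    _ = t ^ 2 / 2 * exp (-t) * (1 / (3 * c ^ 2 * κ) * exp (-t)) := by
      rw [exp_add, ht]
      field_simp
      ring
    _ ≤ 1 / (3 * c ^ 2 * κ) * exp (-t) :=
      mul_le_of_le_one_left (by positivity) (sq_div_two_mul_exp_neg_le_one (by positivity))

lemma abs_exp_cos_sub_gaussian_le_of_abs_le_pi {κ x : ℝ} (hκ : 0 < κ) (hx : |x| ≤ π) :
    |exp (κ * (cos x - 1)) - exp (-(κ * x ^ 2) / 2)| ≤
      π ^ 4 / (12 * κ) * exp (-(κ / π ^ 2) * x ^ 2) := by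
  convert abs_exp_cos_sub_gaussian_le (c := 2 / π ^ 2) (by positivity) hκ
    (cos_le_one_sub_mul_cos_sq hx) using 2
  · field_simp
    norm_num
  · field_simp

lemma gaussian_le_of_pi_le_abs {κ x : ℝ} (hκ : 0 < κ) (hx : π ≤ |x|) :
    exp (-(κ * x ^ 2) / 2) ≤ π ^ 4 / (12 * κ) * exp (-(κ / π ^ 2) * x ^ 2) := by
  have h_rate : κ ≤ κ / 2 * x ^ 2 - κ / π ^ 2 * x ^ 2 := by
    have h_ratio : 1 ≤ x ^ 2 / π ^ 2 := by
      rw [one_le_div (by positivity), ← sq_abs x]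
      gcongr
    have h_half : 9 / 2 * (x ^ 2 / π ^ 2) ≤ x ^ 2 / 2 :=
      calc 9 / 2 * (x ^ 2 / π ^ 2) ≤ π ^ 2 / 2 * (x ^ 2 / π ^ 2) := by
            gcongr
            nlinarith [pi_gt_three]
        _ = x ^ 2 / 2 := by field_simp
    calc κ ≤ κ * (x ^ 2 / 2 - x ^ 2 / π ^ 2) := le_mul_of_one_le_right hκ.le (by linarith [h_ratio])
      _ = κ / 2 * x ^ 2 - κ / π ^ 2 * x ^ 2 := by ring
  have h_exp : exp (-κ) ≤ π ^ 4 / (12 * κ) :=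
    calc exp (-κ) ≤ κ⁻¹ := by
          rw [exp_neg]
          exact inv_anti₀ hκ (by linarith [add_one_le_exp κ])
      _ = 12 / (12 * κ) := by field_simp
      _ ≤ π ^ 4 / (12 * κ) := by
          gcongr
          linarith [pow_le_pow_left₀ zero_le_three pi_gt_three.le 4]
  calc exp (-(κ * x ^ 2) / 2) ≤ exp (-κ + -(κ / π ^ 2) * x ^ 2) :=
        exp_le_exp.2 (by linarith)
    _ = exp (-κ) * exp (-(κ / π ^ 2) * x ^ 2) := exp_add _ _
    _ ≤ π ^ 4 / (12 * κ) * exp (-(κ / π ^ 2) * x ^ 2) := by gcongr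

lemma abs_vonMisesMass_sub_sqrt_le {κ : ℝ} (hκ : 0 < κ) :
    |vonMisesMass κ - √(2 * π / κ)| ≤ π ^ 4 / (12 * κ) * √(π ^ 3 / κ) := by
  have h_gauss (x : ℝ) : exp (-(κ * x ^ 2) / 2) = exp (-(κ / 2) * x ^ 2) := by ring_nf
  have h_gauss_integral : ∫ x : ℝ, exp (-(κ * x ^ 2) / 2) = √(2 * π / κ) := by
    simp only [h_gauss, integral_gaussian]
    congr 1
    field_simp
  have h_bound_integral :
      ∫ x : ℝ, π ^ 4 / (12 * κ) * exp (-(κ / π ^ 2) * x ^ 2) =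
        π ^ 4 / (12 * κ) * √(π ^ 3 / κ) := by
    rw [integral_const_mul, integral_gaussian]
    congr 2
    field_simp
  have h_gauss_integrable : Integrable fun x : ℝ => exp (-(κ * x ^ 2) / 2) := by
    simpa only [h_gauss] using integrable_exp_neg_mul_sq (half_pos hκ)
  have h_bound_integrable :
      Integrable fun x : ℝ => π ^ 4 / (12 * κ) * exp (-(κ / π ^ 2) * x ^ 2) :=
    (integrable_exp_neg_mul_sq (by positivity)).const_mul _
  have h_weight_integrable :
      Integrable ((Set.Ioc (-π) π).indicator fun x => exp (κ * (cos x - 1))) :=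
    (Continuous.integrableOn_Ioc (by fun_prop)).integrable_indicator measurableSet_Ioc
  rw [vonMisesMass, intervalIntegral.integral_of_le (by linarith [pi_pos]),
    ← integral_indicator measurableSet_Ioc, ← h_gauss_integral, ← h_bound_integral,
    ← integral_sub h_weight_integrable h_gauss_integrable, ← Real.norm_eq_abs]
  refine norm_integral_le_of_norm_le h_bound_integrable (.of_forall fun x => ?_)
  rw [Real.norm_eq_abs]
  by_cases hx : x ∈ Set.Ioc (-π) π
  · rw [Set.indicator_of_mem hx]
    exact abs_exp_cos_sub_gaussian_le_of_abs_le_pi hκ (abs_le.2 ⟨hx.1.le, hx.2⟩)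
  · rw [Set.indicator_of_notMem hx, zero_sub, abs_neg, abs_exp]
    refine gaussian_le_of_pi_le_abs hκ ?_
    contrapose! hx
    exact Set.Ioo_subset_Ioc_self (abs_lt.1 hx)

lemma tendsto_sqrt_div_two_pi_atTop : Tendsto (fun κ : ℝ => √(κ / (2 * π))) atTop atTop :=
  tendsto_sqrt_atTop.comp (tendsto_id.atTop_div_const (by positivity))

lemma tendsto_sqrt_mul_vonMisesMass_sub_one :
    Tendsto (fun κ : ℝ => √(κ / (2 * π)) * (√(κ / (2 * π)) * vonMisesMass κ - 1))
      atTop (nhds 0) := by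
  have h_lim : Tendsto (fun κ : ℝ => π ^ 3 / 24 * √(π ^ 3 / κ)) atTop (nhds 0) := by
    simpa using (tendsto_const_nhds.div_atTop tendsto_id).sqrt.const_mul (π ^ 3 / 24)
  refine squeeze_zero_norm' ?_ h_lim
  filter_upwards [eventually_gt_atTop 0] with κ hκ
  have h_inv : √(2 * π / κ) = (√(κ / (2 * π)))⁻¹ := by rw [← sqrt_inv, inv_div]
  have h_factor : √(κ / (2 * π)) * (√(κ / (2 * π)) * vonMisesMass κ - 1) =
      κ / (2 * π) * (vonMisesMass κ - √(2 * π / κ)) := by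
    have h_sq : √(κ / (2 * π)) * √(κ / (2 * π)) = κ / (2 * π) := mul_self_sqrt (by positivity)
    rw [h_inv, mul_sub, mul_sub, ← mul_assoc, h_sq, mul_one, ← div_eq_mul_inv, div_sqrt]
  calc ‖√(κ / (2 * π)) * (√(κ / (2 * π)) * vonMisesMass κ - 1)‖
      = κ / (2 * π) * |vonMisesMass κ - √(2 * π / κ)| := by
        rw [h_factor, Real.norm_eq_abs, abs_mul, abs_of_pos (by positivity)]
    _ ≤ κ / (2 * π) * (π ^ 4 / (12 * κ) * √(π ^ 3 / κ)) := by
        gcongr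
        exact abs_vonMisesMass_sub_sqrt_le hκ
    _ = π ^ 3 / 24 * √(π ^ 3 / κ) := by
        field_simp
        norm_num

lemma tendsto_inv_sub_zero_of_mul_mul_sub_one {ι : Type*} {l : Filter ι} {A Z : ι → ℝ}
    (hA : Tendsto A l atTop) (hAZ : Tendsto (fun i => A i * (A i * Z i - 1)) l (nhds 0)) :
    Tendsto (fun i => (Z i)⁻¹ - A i) l (nhds 0) := by
  have h_prod : Tendsto (fun i => A i * Z i) l (nhds 1) := by
    have h_sub : Tendsto (fun i => A i * Z i - 1) l (nhds 0) := by
      refine (hAZ.div_atTop hA).congr' ?_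
      filter_upwards [hA.eventually_ne_atTop 0] with i hi using mul_div_cancel_left₀ _ hi
    simpa using h_sub.add_const 1
  have h_quot : Tendsto (fun i => -(A i * (A i * Z i - 1)) / (A i * Z i)) l (nhds (-0 / 1)) :=
    hAZ.neg.div h_prod one_ne_zero
  rw [neg_zero, zero_div] at h_quot
  refine h_quot.congr' ?_
  filter_upwards [h_prod.eventually_ne one_ne_zero] with i hi
  have hA_ne : A i ≠ 0 := left_ne_zero_of_mul hi
  have hZ_ne : Z i ≠ 0 := right_ne_zero_of_mul hi
  field_simp
  ring

lemma tendsto_inv_vonMisesMass_sub_sqrt :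
    Tendsto (fun κ : ℝ => (vonMisesMass κ)⁻¹ - √(κ / (2 * π))) atTop (nhds 0) :=
  tendsto_inv_sub_zero_of_mul_mul_sub_one tendsto_sqrt_div_two_pi_atTop
    tendsto_sqrt_mul_vonMisesMass_sub_one

lemma tendsto_sqrt_mul_div_atTop_zero (C : ℝ) :
    Tendsto (fun κ : ℝ => √(κ / (2 * π)) * (C / κ)) atTop (nhds 0) := by
  have h_eq (κ : ℝ) : √(κ / (2 * π)) * (C / κ) = C / (2 * π) / √(κ / (2 * π)) := by
    rw [div_eq_mul_inv _ √(κ / (2 * π)), ← sqrt_div_self]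
    field_simp
  simpa only [h_eq] using tendsto_sqrt_div_two_pi_atTop.const_div_atTop (C / (2 * π))

lemma abs_vonMises_sub_normal_le {c κ u : ℝ} (hc : 0 < c) (hκ : 0 < κ)
    (hu : cos u ≤ 1 - c * u ^ 2) :
    |exp (κ * cos u) / (2 * π * besselI 0 κ) - √(κ / (2 * π)) * exp (-(κ * u ^ 2) / 2)| ≤
      |(vonMisesMass κ)⁻¹ - √(κ / (2 * π))| + √(κ / (2 * π)) * (1 / (3 * c ^ 2) / κ) := by
  set E := exp (κ * (cos u - 1)) with hE
  set G := exp (-(κ * u ^ 2) / 2)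
  set A := √(κ / (2 * π))
  have hE_le : E ≤ 1 :=
    exp_le_one_iff.2 (mul_nonpos_of_nonneg_of_nonpos hκ.le (by linarith [cos_le_one u]))
  have hEG : |E - G| ≤ 1 / (3 * c ^ 2) / κ := by
    rw [div_div]
    refine (abs_exp_cos_sub_gaussian_le hc hκ hu).trans (mul_le_of_le_one_right (by positivity) ?_)
    rw [exp_le_one_iff, neg_mul, neg_nonpos]
    positivity
  rw [exp_mul_cos_div_besselI, ← hE]
  calc |E / vonMisesMass κ - A * G|
      = |E * ((vonMisesMass κ)⁻¹ - A) + A * (E - G)| := by ring_nf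
    _ ≤ E * |(vonMisesMass κ)⁻¹ - A| + A * |E - G| := by
      refine (abs_add_le _ _).trans_eq ?_
      rw [abs_mul, abs_mul, abs_exp, abs_of_nonneg (sqrt_nonneg _)]
    _ ≤ |(vonMisesMass κ)⁻¹ - A| + A * (1 / (3 * c ^ 2) / κ) := by
      gcongr
      exact mul_le_of_le_one_left (abs_nonneg _) hE_le

lemma tendsto_iSup_abs_of_tendstoUniformlyOn_zero {ι α : Type*} {l : Filter ι} {s : Set α}
    {F : ι → α → ℝ} (hF : TendstoUniformlyOn F 0 l s) :
    Tendsto (fun i => ⨆ x : s, |F i x|) l (nhds 0) := by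
  refine Metric.tendsto_nhds.2 fun ε hε => ?_
  filter_upwards [Metric.tendstoUniformlyOn_iff.1 hF (ε / 2) (half_pos hε)] with i hi
  have h_le : ⨆ x : s, |F i x| ≤ ε / 2 := by
    refine Real.iSup_le (fun x => ?_) (half_pos hε).le
    simpa using (hi x x.2).le
  rw [Real.dist_0_eq_abs, abs_of_nonneg (Real.iSup_nonneg fun _ => abs_nonneg _)]
  exact h_le.trans_lt (half_lt_self hε)

theorem vonMises_normal_approx_general (μ : ℝ) {a : ℝ} (ha : a < 2 * π) :
    TendstoUniformlyOn (fun κ x : ℝ =>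
        exp (κ * cos (x - μ)) / (2 * π * besselI 0 κ) -
          √(κ / (2 * π)) * exp (-(κ * (x - μ) ^ 2) / 2))
      0 atTop (Set.Icc (μ - a) (μ + a)) := by
  obtain ⟨c, hc, h_cos⟩ := exists_cos_le_one_sub_mul_sq ha
  have h_lim : Tendsto (fun κ : ℝ => |(vonMisesMass κ)⁻¹ - √(κ / (2 * π))| +
      √(κ / (2 * π)) * (1 / (3 * c ^ 2) / κ)) atTop (nhds 0) := by
    simpa using tendsto_inv_vonMisesMass_sub_sqrt.abs.add (tendsto_sqrt_mul_div_atTop_zero _)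
  refine Metric.tendstoUniformlyOn_iff.2 fun ε hε => ?_
  filter_upwards [h_lim.eventually_lt_const hε, eventually_gt_atTop 0] with κ h_lt hκ x hx
  have hu : x - μ ∈ Set.Icc (-a) a := ⟨by linarith [hx.1], by linarith [hx.2]⟩
  rw [dist_comm, Pi.zero_apply, Real.dist_0_eq_abs]
  exact (abs_vonMises_sub_normal_le hc hκ (h_cos _ hu)).trans_lt h_lt

/-- the von Mises density converges uniformly on compact neighborhoods of `μ`
to the normal density with mean `μ` and variance `1/κ` as `κ → ∞`. -/
theorem vonMises_normal_approx (μ : ℝ) (a : ℝ) (ha : 0 < a) (ha' : a < Real.pi) :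
    Tendsto (fun κ : ℝ =>
        ⨆ x : Set.Icc (μ - a) (μ + a),
          |Real.exp (κ * Real.cos ((x : ℝ) - μ)) / (2 * Real.pi * besselI 0 κ) -
            Real.sqrt (κ / (2 * Real.pi)) * Real.exp (-(κ * ((x : ℝ) - μ) ^ 2) / 2)|)
      atTop (nhds 0) :=
  tendsto_iSup_abs_of_tendstoUniformlyOn_zero
    (vonMises_normal_approx_general μ (by linarith [pi_pos]))
end
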